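/- arXiv:0906.0818 — 2 statements merged into one kernel-verified Lean document; each statement's English description precedes it below -/
import Mathlib

section
/- Let R be a commutative ring of prime characteristic p, let M be a sub-R-module of the module Der(R) of derivations that is closed under the Lie bracket, and let q : Der(R) → Der(R)/M be the quotient map. Then the map φ : M → Der(R)/M sending D to q(D^p) is p-semilinear, i.e. φ(D+E) = φ(D) + φ(E) and φ(f·D) = f^p·φ(D) for all f ∈ R and D, E ∈ M. -/
open Polynomial Finset

section Jacobson

variable {A : Type*} [Ring A]

lemma Polynomial.derivative_pow_succ_eq_sum_antidiagonal (a : A[X]) (n : ℕ) :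
    derivative (a ^ (n + 1)) = ∑ ij ∈ antidiagonal n, a ^ ij.1 * derivative a * a ^ ij.2 := by
  induction n with
  | zero => simp
  | succ n ih =>
    rw [pow_succ', derivative_mul, ih, Finset.Nat.sum_antidiagonal_succ, mul_sum]
    simp [pow_succ', mul_assoc]

lemma Nat.Prime.cast_choose_pred_eq {p : ℕ} (hp : p.Prime) [CharP A p] {k : ℕ} (hk : k < p) :
    ((p - 1).choose k : A) = (-1) ^ k := by
  induction k with
  | zero => simp
  | succ k ih =>
    have h : ((p.choose (k + 1) : ℕ) : A) = 0 :=
      (CharP.cast_eq_zero_iff A p _).2 (hp.dvd_choose_self k.succ_ne_zero hk)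
    rw [← Nat.sub_add_cancel hp.one_le, Nat.choose_succ_succ, Nat.cast_add,
      ih (by omega), add_comm] at h
    rw [eq_neg_of_add_eq_zero_left h, pow_succ, mul_neg_one]

/-- In characteristic `p`, the `(p - 1)`-st iterated commutator with `a` is
`x ↦ ∑ aⁱ x aʲ`, summed over `i + j = p - 1`. -/
lemma iterate_commutator_pred_prime {p : ℕ} (hp : p.Prime) [CharP A p] (a x : A) :
    (fun z ↦ a * z - z * a)^[p - 1] x = ∑ ij ∈ antidiagonal (p - 1), a ^ ij.1 * x * a ^ ij.2 := by
  have hfun : (fun z ↦ a * z - z * a) = ⇑(LinearMap.mulLeft ℤ a + LinearMap.mulRight ℤ (-a)) := by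
    ext z
    simp [sub_eq_add_neg]
  rw [hfun, ← Module.End.pow_apply, Commute.add_pow' (LinearMap.commute_mulLeft_right a (-a)),
    LinearMap.sum_apply]
  refine sum_congr rfl fun ij hij ↦ ?_
  rw [HasAntidiagonal.mem_antidiagonal] at hij
  have hp0 := hp.pos
  rw [LinearMap.smul_apply, Module.End.mul_apply, LinearMap.pow_mulLeft, LinearMap.pow_mulRight,
    LinearMap.mulLeft_apply, LinearMap.mulRight_apply, nsmul_eq_mul,
    Nat.choose_symm_of_eq_add hij.symm, hp.cast_choose_pred_eq (A := A) (by omega), neg_pow a]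
  rcases neg_one_pow_eq_or A ij.2 with h | h <;> simp [h, mul_assoc]

/-- **Jacobson's formula**: in characteristic `p`, `(x + y) ^ p - x ^ p - y ^ p` lies in every
additive subgroup closed under commutators that contains `x` and `y`. -/
theorem add_pow_char_sub_mem_of_commutator_mem {p : ℕ} (hp : p.Prime) [CharP A p]
    (L : AddSubgroup A) (hL : ∀ x ∈ L, ∀ y ∈ L, x * y - y * x ∈ L) {x y : A}
    (hx : x ∈ L) (hy : y ∈ L) : (x + y) ^ p - x ^ p - y ^ p ∈ L := by
  set a : A[X] := C x * X + C y with ha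
  have hiter (m n : ℕ) : ((fun z ↦ a * z - z * a)^[m] (C x)).coeff n ∈ L := by
    induction m generalizing n with
    | zero =>
      rw [Function.iterate_zero_apply, coeff_C]
      split_ifs
      exacts [hx, L.zero_mem]
    | succ m ih =>
      rw [Function.iterate_succ_apply']
      set z := (fun z ↦ a * z - z * a)^[m] (C x)
      have hz : a * z - z * a = (C x * z - z * C x) * X + (C y * z - z * C y) := by
        rw [ha, add_mul, mul_add, mul_assoc, X_mul, sub_mul, mul_assoc, mul_assoc]
        abel
      rw [hz, coeff_add]
      refine L.add_mem ?_ (by simpa using hL _ hy _ (ih n))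
      cases n with
      | zero => simp
      | succ n => simpa using hL _ hx _ (ih n)
  have hder : derivative (a ^ p) = (fun z ↦ a * z - z * a)^[p - 1] (C x) := by
    rw [iterate_commutator_pred_prime hp]
    conv_lhs => rw [← Nat.sub_add_cancel hp.one_le]
    rw [derivative_pow_succ_eq_sum_antidiagonal]
    simp [ha]
  have hcoeff (k : ℕ) (hk0 : k ≠ 0) (hkp : k < p) : (a ^ p).coeff k ∈ L := by
    obtain ⟨n, rfl⟩ := Nat.exists_eq_add_one_of_ne_zero hk0
    have h := hiter (p - 1) n
    rw [← hder, coeff_derivative] at h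
    obtain ⟨u, v, huv⟩ : IsCoprime ((n + 1 : ℕ) : ℤ) (p : ℤ) :=
      Nat.isCoprime_iff_coprime.2 (hp.coprime_iff_not_dvd.2 (Nat.not_dvd_of_pos_of_lt
        n.succ_pos hkp)).symm
    have hcast := congrArg (Int.cast : ℤ → A) huv
    push_cast at hcast
    rw [CharP.cast_eq_zero A p, mul_zero, add_zero, (Int.cast_commute u _).eq] at hcast
    have hu := L.zsmul_mem h u
    rwa [zsmul_eq_mul, (Int.cast_commute u _).eq, mul_assoc, hcast, mul_one] at hu
  have hdeg : a.natDegree ≤ 1 := natDegree_linear_le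
  have hsum : (x + y) ^ p = ∑ k ∈ range (p + 1), (a ^ p).coeff k := by
    let ev : A[X] →+* A := eval₂RingHom' (RingHom.id A) 1 fun r ↦ Commute.one_right r
    have hev : ev (a ^ p) = (x + y) ^ p := by
      rw [map_pow]
      congr 1
      simp [ev, ha, eval₂RingHom']
    have hdegp : (a ^ p).natDegree < p + 1 :=
      Nat.lt_succ_of_le ((natDegree_pow_le_of_le p hdeg).trans_eq (mul_one p))
    rw [← hev]
    change eval₂ (RingHom.id A) 1 (a ^ p) = _
    rw [eval₂_eq_sum_range' _ hdegp]
    simp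
  have h0 : (a ^ p).coeff 0 = y ^ p := by
    rw [← constantCoeff_apply, map_pow]
    simp [ha]
  have hpp : (a ^ p).coeff p = x ^ p := by
    have h := coeff_pow_of_natDegree_le (m := p) hdeg
    rw [mul_one] at h
    rw [h]
    simp [ha]
  have hmid := L.sum_mem (t := Ico 1 p) fun k hk ↦
    hcoeff k (Nat.one_le_iff_ne_zero.1 (mem_Ico.1 hk).1) (mem_Ico.1 hk).2
  rw [hsum, sum_range_succ, range_eq_Ico, sum_eq_sum_Ico_succ_bot hp.pos, h0, hpp]
  convert hmid using 1
  abel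

end Jacobson

section Hochschild

lemma Derivation.iterate_leibniz {K S : Type*} [CommSemiring K] [CommRing S] [Algebra K S]
    (D : Derivation K S S) (n : ℕ) (a b : S) :
    D^[n] (a * b) = ∑ ij ∈ antidiagonal n, n.choose ij.1 • (D^[ij.1] a * D^[ij.2] b) := by
  induction n with
  | zero => simp
  | succ n ih =>
    rw [Finset.sum_antidiagonal_choose_succ_nsmul (M := S) (fun i j ↦ D^[i] a * D^[j] b) n,
      Function.iterate_succ_apply', ih, map_sum, ← sum_add_distrib]
    refine sum_congr rfl fun ij hij ↦ ?_
    rw [← Nat.choose_symm_of_eq_add (HasAntidiagonal.mem_antidiagonal.1 hij).symm,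
      map_nsmul, D.leibniz, ← nsmul_add]
    simp only [Function.iterate_succ_apply', smul_eq_mul]
    ring

/-- In characteristic `p`, the `p`-th iterate of a derivation satisfies the Leibniz rule. -/
lemma Derivation.iterate_char_mul {K S : Type*} [CommSemiring K] [CommRing S] [Algebra K S]
    {p : ℕ} (hp : p.Prime) [CharP S p] (D : Derivation K S S) (a b : S) :
    D^[p] (a * b) = D^[p] a * b + a * D^[p] b := by
  rw [D.iterate_leibniz, Finset.Nat.sum_antidiagonal_eq_sum_range_succ
    (fun i j ↦ p.choose i • (D^[i] a * D^[j] b))]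
  obtain ⟨q, rfl⟩ := Nat.exists_eq_add_one_of_ne_zero hp.ne_zero
  rw [sum_range_succ, sum_range_succ', sum_eq_zero]
  · simp [add_comm]
  · intro k hk
    have h : (((q + 1).choose (k + 1) : ℕ) : S) = 0 := (CharP.cast_eq_zero_iff S (q + 1) _).2
      (hp.dvd_choose_self k.succ_ne_zero (Nat.succ_lt_succ (mem_range.1 hk)))
    rw [nsmul_eq_mul, h, zero_mul]

/-- The iterates of `F = f • D` are combinations of the iterates of `D`, with leading coefficient
a power of `f`. -/
lemma Derivation.exists_iterate_smul_eq_sum {K S : Type*} [CommSemiring K] [CommRing S]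
    [Algebra K S] (D : Derivation K S S) (f : S) {F : S → S} (hF : ∀ a, F a = f * D a) (n : ℕ) :
    ∃ c : ℕ → S, c n = f ^ n ∧ ∀ a, F^[n] a = ∑ k ∈ range (n + 1), c k * D^[k] a := by
  induction n with
  | zero => exact ⟨fun _ ↦ 1, by simp, by simp⟩
  | succ n ih =>
    obtain ⟨c, hcn, hc⟩ := ih
    refine ⟨fun k ↦ f * ((if k ≤ n then D (c k) else 0) + if k = 0 then 0 else c (k - 1)),
      by simp [hcn, pow_succ'], fun a ↦ ?_⟩
    have h1 : ∑ k ∈ range (n + 2), f * (if k ≤ n then D (c k) else 0) * D^[k] a =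
        ∑ k ∈ range (n + 1), f * (D (c k) * D^[k] a) := by
      rw [sum_range_succ, if_neg (by omega), mul_zero, zero_mul, add_zero]
      refine sum_congr rfl fun k hk ↦ ?_
      rw [if_pos (Nat.lt_succ_iff.1 (mem_range.1 hk)), mul_assoc]
    have h2 : ∑ k ∈ range (n + 2), f * (if k = 0 then 0 else c (k - 1)) * D^[k] a =
        ∑ k ∈ range (n + 1), f * (c k * D^[k + 1] a) := by
      rw [sum_range_succ']
      simp [mul_assoc]
    simp only [mul_add, add_mul, sum_add_distrib]
    rw [h1, h2, Function.iterate_succ_apply', hc, hF, map_sum, mul_sum,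
      ← sum_add_distrib]
    refine sum_congr rfl fun k _ ↦ ?_
    rw [D.leibniz, Function.iterate_succ_apply', smul_eq_mul, smul_eq_mul]
    ring

/-- **Hochschild's formula**, without the explicit coefficient of `D`: in characteristic `p`, the
`p`-th iterate of `f • D` is `f ^ p` times that of `D` plus a multiple of `D`. -/
theorem Derivation.exists_iterate_char_smul {R : Type*} [CommRing R] {p : ℕ} (hp : p.Prime)
    [CharP R p] (D : Derivation ℤ R R) (f : R) :
    ∃ g : R, ∀ a, (f • D)^[p] a = f ^ p * D^[p] a + g * D a := by
  let _ : Differential R := ⟨D⟩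
  -- On `R[X]`, extend `D` by `X ↦ 1` so that low iterates become separated by powers of `X`.
  let E : Derivation ℤ R[X] R[X] := Differential.implicitDeriv 1
  have hEC (a : R) : E (C a) = C (D a) := Differential.implicitDeriv_C 1 a
  have hEX : E X = 1 := Differential.implicitDeriv_X 1
  have hECk (k : ℕ) (a : R) : E^[k] (C a) = C (D^[k] a) := by
    induction k with
    | zero => rfl
    | succ k ih => rw [Function.iterate_succ_apply', ih, hEC, Function.iterate_succ_apply']
  obtain ⟨F, hF⟩ : ∃ F : Derivation ℤ R[X] R[X], ∀ a, F a = C f * E a := ⟨C f • E, fun _ ↦ rfl⟩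
  have hFC (k : ℕ) (a : R) : F^[k] (C a) = C ((f • D)^[k] a) := by
    induction k with
    | zero => rfl
    | succ k ih =>
      rw [Function.iterate_succ_apply', ih, Function.iterate_succ_apply']
      simp [hF, hEC]
  have hEXk (k m : ℕ) : E^[k] (X ^ m) = (m.descFactorial k : R[X]) * X ^ (m - k) := by
    induction k with
    | zero => simp
    | succ k ih =>
      rw [Function.iterate_succ_apply', ih, E.leibniz, E.leibniz_pow, hEX, E.map_natCast,
        Nat.descFactorial_succ]
      simp [Nat.sub_sub]
      ring
  obtain ⟨c, hcp, hc⟩ := E.exists_iterate_smul_eq_sum (C f) hF p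
  have hQ := F.iterate_char_mul hp
  have hev (m : ℕ) (hm : m < p) : eval 0 (F^[p] (X ^ m)) = eval 0 (c m) * m.factorial := by
    rw [hc, eval_finsetSum, sum_eq_single_of_mem m (mem_range.2 (by omega))]
    · simp [hEXk, Nat.descFactorial_self]
    · intro k _ hkm
      rw [hEXk]
      rcases lt_or_gt_of_ne hkm with h | h
      · simp [zero_pow (Nat.sub_ne_zero_of_lt h)]
      · simp [Nat.descFactorial_of_lt h]
  have hunit (m : ℕ) (hm : m < p) (x : R) (hx : x * m.factorial = 0) : x = 0 := by
    have : IsUnit (m.factorial : R) :=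
      (CharP.isUnit_natCast_iff hp).2 fun h ↦ hm.not_ge (hp.dvd_factorial.1 h)
    exact (this.mul_left_eq_zero).1 hx
  have hc0 : eval 0 (c 0) = 0 := by
    refine hunit 0 hp.pos _ ?_
    rw [← hev 0 hp.pos]
    have := hQ 1 1
    rw [mul_one, mul_one, one_mul, left_eq_add] at this
    simp [this]
  have hck (m : ℕ) (hm : m + 2 < p) : eval 0 (c (m + 2)) = 0 := by
    refine hunit _ hm _ ?_
    rw [← hev _ hm, pow_succ', hQ, pow_succ']
    simp
  refine ⟨eval 0 (c 1), fun a ↦ ?_⟩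
  have h := congrArg (eval 0) (hFC p a)
  rw [hc, eval_finsetSum, eval_C] at h
  rw [← h, sum_range_succ, hcp, sum_eq_single_of_mem 1 (mem_range.2 hp.one_lt)]
  · simp [hEC, hECk, add_comm]
  · intro k hk hk1
    rcases k with _ | _ | k
    · simp [hc0]
    · exact absurd rfl hk1
    · simp [hck k (mem_range.1 hk)]

end Hochschild

/-- Let `M` be an `R`-submodule of the derivations of `R` (char `p`) closed under the
Lie bracket, and suppose the `p`-th iterate of a derivation is again a derivation
(encoded by `pow`/`hpow`). Then `D ↦ q(D^p)` into `Der(R)/M` is `p`-semilinear: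
additive, and `φ(f • D) = f^p • φ(D)`. -/
theorem stmt_1 {R : Type*} [CommRing R] (p : ℕ) (hp : p.Prime) [CharP R p]
    (M : Submodule R (Derivation ℤ R R))
    (hbr : ∀ D ∈ M, ∀ E ∈ M,
      ∃ C : Derivation ℤ R R, (∀ a : R, C a = D (E a) - E (D a)) ∧ C ∈ M)
    (pow : Derivation ℤ R R → Derivation ℤ R R)
    (hpow : ∀ (D : Derivation ℤ R R) (a : R), pow D a = (⇑D)^[p] a) :
    (∀ D ∈ M, ∀ E ∈ M,
      (Submodule.Quotient.mk (pow (D + E)) : Derivation ℤ R R ⧸ M) =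
        Submodule.Quotient.mk (pow D) + Submodule.Quotient.mk (pow E)) ∧
    (∀ (f : R), ∀ D ∈ M,
      (Submodule.Quotient.mk (pow (f • D)) : Derivation ℤ R R ⧸ M) =
        f ^ p • (Submodule.Quotient.mk (pow D) : Derivation ℤ R R ⧸ M)) := by
  have : CharP (Module.End ℤ R) p :=
    charP_of_injective_ringHom (f := (Algebra.lmul ℤ R).toRingHom) Algebra.lmul_injective p
  constructor
  · intro D hD E hE
    let L : AddSubgroup (Module.End ℤ R) :=
      { carrier := {T | ∃ F ∈ M, (F : R →ₗ[ℤ] R) = T}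
        zero_mem' := ⟨0, M.zero_mem, rfl⟩
        add_mem' := by
          rintro _ _ ⟨F, hF, rfl⟩ ⟨G, hG, rfl⟩
          exact ⟨F + G, M.add_mem hF hG, rfl⟩
        neg_mem' := by
          rintro _ ⟨F, hF, rfl⟩
          exact ⟨-F, M.neg_mem hF, rfl⟩ }
    have hL : ∀ x ∈ L, ∀ y ∈ L, x * y - y * x ∈ L := by
      rintro _ ⟨F, hF, rfl⟩ _ ⟨G, hG, rfl⟩
      obtain ⟨B, hB, hBM⟩ := hbr F hF G hG
      exact ⟨B, hBM, LinearMap.ext hB⟩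
    obtain ⟨F, hF, hFeq⟩ := add_pow_char_sub_mem_of_commutator_mem hp L hL
      (x := (D : R →ₗ[ℤ] R)) (y := (E : R →ₗ[ℤ] R)) ⟨D, hD, rfl⟩ ⟨E, hE, rfl⟩
    rw [← Submodule.Quotient.mk_add, Submodule.Quotient.eq]
    convert hF using 1
    ext a
    have h := LinearMap.congr_fun hFeq a
    simp only [LinearMap.sub_apply, Module.End.pow_apply] at h
    change F a = (⇑(D + E))^[p] a - (⇑D)^[p] a - (⇑E)^[p] a at h
    rw [h]
    simp [hpow, sub_sub]
  · intro f D hD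
    obtain ⟨g, hg⟩ := D.exists_iterate_char_smul hp f
    rw [← Submodule.Quotient.mk_smul, Submodule.Quotient.eq]
    convert M.smul_mem g hD using 1
    ext a
    rw [Derivation.sub_apply, hpow, hg, Derivation.smul_apply, hpow, smul_eq_mul,
      add_sub_cancel_left, Derivation.smul_apply, smul_eq_mul]
end

section
/- Let E be a vector bundle on P¹ over an algebraically closed field fitting in a short exact sequence 0 → O^{n-r} → E → ⊕_{i=1}^{r} O(a_i) → 0 with all a_i > 0. Write E ≅ ⊕ O(b_j) by Grothendieck's theorem, and let r' be the number of indices j with b_j > 0. Then either r' > r, or r' = r and the exact sequence splits, i.e. E ≅ O^{n-r} ⊕ (⊕_{i=1}^r O(a_i)). -/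
open MvPolynomial

/-- A bundle map `O(c) → O(d)` on `P¹` is given by a bihomogeneous polynomial of degree
`d - c` in the two homogeneous coordinates; for `d - c < 0` only the zero map exists. -/
def IsHomDeg {k : Type*} [CommSemiring k] (d : ℤ) (f : MvPolynomial (Fin 2) k) : Prop :=
  (0 ≤ d → f.IsHomogeneous d.toNat) ∧ (d < 0 → f = 0)

theorem eq_of_eval_eq_of_ne_zero {k : Type*} [Field k] [Infinite k]
    {p q : MvPolynomial (Fin 2) k} (h : ∀ v : Fin 2 → k, v ≠ 0 → eval v p = eval v q) :
    p = q := by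
  refine mul_left_cancel₀ (X_ne_zero (0 : Fin 2)) (funext fun v => ?_)
  by_cases hv : v = 0
  · simp [hv]
  · simp [h v hv]

theorem exists_mul_eq_one_of_surjective {k m ι : Type*} [Field k] [Fintype m] [Fintype ι]
    [DecidableEq m] [DecidableEq ι] (M : Matrix m ι k) (hM : Function.Surjective M.mulVecLin) :
    ∃ R : Matrix ι m k, M * R = 1 := by
  obtain ⟨g, hg⟩ := M.mulVecLin.exists_rightInverse_of_surjective (LinearMap.range_eq_top.2 hM)
  refine ⟨LinearMap.toMatrix' g, ?_⟩
  have := congrArg LinearMap.toMatrix' hg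
  rwa [LinearMap.toMatrix'_comp, LinearMap.toMatrix'_id, ← Matrix.toLin'_apply',
    LinearMap.toMatrix'_toLin'] at this

theorem eval_comp_vecMul {k m ι : Type*} [Field k] [Fintype m]
    (G : Matrix m ι (MvPolynomial (Fin 2) k))
    (u : m → MvPolynomial (Fin 2) k) (v : Fin 2 → k) (j : ι) :
    eval v ((Matrix.vecMul u G) j) =
      Matrix.vecMul (fun i => eval v (u i)) (Matrix.of fun i j => eval v (G i j)) j := by
  simp [Matrix.vecMul, dotProduct]

/-- If `G` is surjective at every point other than the origin, then a polynomial row vector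
which lies in the row space of `G` at each such point is a polynomial combination of the rows. -/
theorem exists_vecMul_eq_of_forall_ne_zero {k m ι : Type*} [Field k] [IsAlgClosed k]
    [Fintype m] [Fintype ι] (G : Matrix m ι (MvPolynomial (Fin 2) k))
    (c : ι → MvPolynomial (Fin 2) k)
    (hG : ∀ v : Fin 2 → k, v ≠ 0 →
      Function.Surjective ((Matrix.of fun i j => eval v (G i j)).mulVecLin))
    (hc : ∀ v : Fin 2 → k, v ≠ 0 → ∃ h : m → k,
      Matrix.vecMul h (Matrix.of fun i j => eval v (G i j)) = fun j => eval v (c j)) :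
    ∃ h : m → MvPolynomial (Fin 2) k, Matrix.vecMul h G = c := by
  classical
  have : Infinite k := IsAlgClosed.instInfinite
  have hinj : Function.Injective G.vecMulLinear := by
    rw [injective_iff_map_eq_zero]
    intro w hw
    funext i
    refine eq_of_eval_eq_of_ne_zero fun v hv => ?_
    obtain ⟨R, hR⟩ := exists_mul_eq_one_of_surjective _ (hG v hv)
    have h0 : Matrix.vecMul (fun i => eval v (w i)) (Matrix.of fun i j => eval v (G i j)) = 0 := by
      funext j
      rw [← eval_comp_vecMul, ← Matrix.vecMulLinear_apply, hw]
      simp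
    have h1 := congrArg (fun x => Matrix.vecMul x R) h0
    simp only [Matrix.vecMul_vecMul, hR, Matrix.vecMul_one, Matrix.zero_vecMul] at h1
    simpa using congrFun h1 i
  let I : Ideal (MvPolynomial (Fin 2) k) :=
    (LinearMap.range G.vecMulLinear).comap (LinearMap.toSpanSingleton _ _ c)
  have hI : ∀ v ∈ zeroLocus k I, v = 0 := by
    intro v hv
    by_contra hv0
    obtain ⟨R, hR⟩ := exists_mul_eq_one_of_surjective _ (hG v hv0)
    let RP : Matrix ι m (MvPolynomial (Fin 2) k) := R.map C
    have hRP : ∀ w, (RP.map (eval w)) = R := by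
      intro w; ext; simp [RP]
    have hmem : (G * RP).det ∈ I := by
      refine ⟨Matrix.vecMul (Matrix.vecMul c RP) (G * RP).adjugate, ?_⟩
      funext j
      refine eq_of_eval_eq_of_ne_zero fun w hw => ?_
      obtain ⟨h, hh⟩ := hc w hw
      have e1 : (fun i => eval w ((Matrix.vecMul (Matrix.vecMul c RP) (G * RP).adjugate) i)) =
          Matrix.vecMul (Matrix.vecMul (fun j => eval w (c j)) R)
            (G.map (eval w) * R).adjugate := by
        rw [← hRP w, ← Matrix.map_mul]
        funext i
        rw [eval_comp_vecMul]
        congr 1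
        · funext i'
          rw [eval_comp_vecMul]
          rfl
        · exact RingHom.map_adjugate (eval w) (G * RP)
      have e2 : eval w (G * RP).det = (G.map (eval w) * R).det := by
        rw [RingHom.map_det, ← hRP w, ← Matrix.map_mul]
        rfl
      have hh' : Matrix.vecMul h (G.map (eval w)) = fun j => eval w (c j) := hh
      have e3 : Matrix.vecMul (Matrix.vecMul (fun j => eval w (c j)) R)
          (G.map (eval w) * R).adjugate = (G.map (eval w) * R).det • h := by
        rw [← hh', Matrix.vecMul_vecMul, Matrix.vecMul_vecMul, ← Matrix.mul_assoc,
          Matrix.mul_adjugate, Matrix.vecMul_smul, Matrix.vecMul_one]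
      rw [Matrix.vecMulLinear_apply, eval_comp_vecMul, e1, e3, Matrix.smul_vecMul, hh, ← e2]
      simp
    have hdet := hv _ hmem
    rw [aeval_eq_eval, RingHom.map_det] at hdet
    have : (eval v).mapMatrix (G * RP) = (Matrix.of fun i j => eval v (G i j)) * R := by
      rw [← hRP v]
      exact Matrix.map_mul
    rw [this, hR, Matrix.det_one] at hdet
    exact one_ne_zero hdet
  have hX : ∀ s : Fin 2, ∃ N : ℕ, ∃ u,
      G.vecMulLinear u = (X s : MvPolynomial (Fin 2) k) ^ N • c := by
    intro s
    have : (X s : MvPolynomial (Fin 2) k) ∈ I.radical := by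
      rw [← vanishingIdeal_zeroLocus_eq_radical (K := k)]
      intro v hv
      simp [hI v hv]
    obtain ⟨N, u, hu⟩ := this
    exact ⟨N, u, hu⟩
  obtain ⟨M, u, hu⟩ := hX 0
  obtain ⟨N, w, hw⟩ := hX 1
  have huw : (X 1 : MvPolynomial (Fin 2) k) ^ N • u = (X 0 : MvPolynomial (Fin 2) k) ^ M • w := by
    apply hinj
    rw [map_smul, map_smul, hu, hw, smul_comm]
  have hdvd : ∀ i, (X 0 : MvPolynomial (Fin 2) k) ^ M ∣ u i := by
    intro i
    refine (X_prime (i := (0 : Fin 2))).pow_dvd_of_dvd_mul_left M (a := X 1 ^ N) ?_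
      ⟨w i, congrFun huw i⟩
    intro h
    have := (X_prime (i := (0 : Fin 2))).dvd_of_dvd_pow h
    rw [X_dvd_X] at this
    exact zero_ne_one this
  choose h hh using hdvd
  refine ⟨h, ?_⟩
  have hu' : u = (X 0 : MvPolynomial (Fin 2) k) ^ M • h := funext hh
  rw [hu', map_smul] at hu
  funext j
  exact mul_left_cancel₀ (pow_ne_zero M (X_ne_zero 0)) (congrFun hu j)

theorem IsHomDeg.eval_zero_eq_zero {k : Type*} [Field k] {d : ℤ} {f : MvPolynomial (Fin 2) k}
    (hf : IsHomDeg d f) (hd : d ≠ 0) : eval 0 f = 0 := by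
  rcases lt_or_gt_of_ne hd with h | h
  · simp [hf.2 h]
  · rw [eval_zero, constantCoeff_eq]
    refine (hf.1 h.le).coeff_eq_zero ?_
    simp
    omega

theorem IsHomDeg.eval_eq_eval_zero {k : Type*} [Field k] {d : ℤ} {f : MvPolynomial (Fin 2) k}
    (hf : IsHomDeg d f) (hd : d ≤ 0) (v : Fin 2 → k) : eval v f = eval 0 f := by
  rcases hd.lt_or_eq with h | rfl
  · simp [hf.2 h]
  · have := hf.1 le_rfl
    rw [Int.toNat_zero, ← totalDegree_zero_iff_isHomogeneous, totalDegree_eq_zero_iff_eq_C] at this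
    rw [this]
    simp

/-- Given a short exact sequence `0 → O^{n-r} → E → ⊕_{i=1}^r O(a_i) → 0` on `P¹` with all
`a_i > 0` (encoded fiberwise), write `E ≅ ⊕ O(b_j)` and let `r'` be the number of `j` with
`b_j > 0`. Then either `r' > r`, or `r' = r` and the sequence splits, i.e.
`E ≅ O^{n-r} ⊕ (⊕ O(a_i))` (equality of splitting types as multisets). -/
theorem stmt_6 {k : Type*} [Field k] [IsAlgClosed k] (n r : ℕ) (hrn : r ≤ n)
    (b : Fin n → ℤ) (a : Fin r → ℤ) (ha : ∀ i, 0 < a i)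
    (F : Fin n → Fin (n - r) → MvPolynomial (Fin 2) k)
    (G : Fin r → Fin n → MvPolynomial (Fin 2) k)
    (hF : ∀ i j, IsHomDeg (b i) (F i j))
    (hG : ∀ i j, IsHomDeg (a i - b j) (G i j))
    (hexact : ∀ v : Fin 2 → k, v ≠ 0 →
      Function.Injective ((Matrix.of fun i j => eval v (F i j)).mulVecLin) ∧
      Function.Surjective ((Matrix.of fun i j => eval v (G i j)).mulVecLin) ∧
      LinearMap.range ((Matrix.of fun i j => eval v (F i j)).mulVecLin) =
        LinearMap.ker ((Matrix.of fun i j => eval v (G i j)).mulVecLin)) :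
    r < (Finset.univ.filter fun j => 0 < b j).card ∨
    ((Finset.univ.filter fun j => 0 < b j).card = r ∧
      Multiset.map b Finset.univ.val =
        Multiset.replicate (n - r) 0 + Multiset.map a Finset.univ.val) := by
  classical
  let A : Matrix {j // b j ≤ 0} (Fin (n - r)) k := Matrix.of fun j i => eval 0 (F j i)
  have hAinj : Function.Injective A.vecMulLinear := by
    rw [injective_iff_map_eq_zero]
    intro c hc
    let c' : Fin n → k := fun j => if h : b j ≤ 0 then c ⟨j, h⟩ else 0
    have hc'F : ∀ v, Matrix.vecMul c' (Matrix.of fun i j => eval v (F i j)) = 0 := by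
      intro v
      rw [← hc]
      funext i
      simp only [Matrix.vecMulLinear_apply, Matrix.vecMul, dotProduct, Matrix.of_apply, A]
      rw [← Fintype.sum_subtype_add_sum_subtype (fun j => b j ≤ 0)]
      rw [Finset.sum_eq_zero (s := (Finset.univ : Finset {j // ¬ b j ≤ 0}))
        (fun j _ => by simp [c', j.2]), add_zero]
      exact Finset.sum_congr rfl fun j _ => by
        simp [c', j.2, (hF j i).eval_eq_eval_zero j.2 v]
    obtain ⟨h, hh⟩ := exists_vecMul_eq_of_forall_ne_zero (Matrix.of G) (fun j => C (c' j))
      (fun v hv => (hexact v hv).2.1) (fun v hv => by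
        obtain ⟨-, hs, he⟩ := hexact v hv
        obtain ⟨R, hR⟩ := exists_mul_eq_one_of_surjective _ hs
        set g : Matrix (Fin r) (Fin n) k := Matrix.of fun i j => eval v (G i j)
        refine ⟨Matrix.vecMul c' R, ?_⟩
        simp only [eval_C]
        change Matrix.vecMul (Matrix.vecMul c' R) g = c'
        rw [Matrix.vecMul_vecMul, ← sub_eq_zero, ← dotProduct_eq_zero_iff]
        intro x
        have hx : x - Matrix.mulVec (R * g) x ∈ LinearMap.ker g.mulVecLin := by
          simp [Matrix.mulVec_sub, ← Matrix.mul_assoc, hR]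
        rw [← he] at hx
        obtain ⟨y, hy⟩ := hx
        have h1 : c' ⬝ᵥ (x - Matrix.mulVec (R * g) x) = 0 := by
          rw [← hy, Matrix.mulVecLin_apply, Matrix.dotProduct_mulVec, hc'F v, zero_dotProduct]
        rw [sub_dotProduct, ← Matrix.dotProduct_mulVec, ← neg_eq_zero, neg_sub,
          ← dotProduct_sub, h1])
    funext ⟨j, hj⟩
    have h0 := congrArg (eval 0) (congrFun hh j)
    rw [eval_comp_vecMul, eval_C] at h0
    have hz : ∀ i, eval 0 (G i j) = 0 := fun i =>
      (hG i j).eval_zero_eq_zero (by have := ha i; omega)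
    simp only [Matrix.vecMul, dotProduct, Matrix.of_apply, hz, mul_zero, Finset.sum_const_zero,
      c', hj, dif_pos] at h0
    exact h0.symm
  have hcardJ : Fintype.card {j // b j ≤ 0} ≤ n - r := by
    have := LinearMap.finrank_le_finrank_of_injective hAinj
    simpa using this
  have hcard : Fintype.card {j // b j ≤ 0} + Fintype.card {j // 0 < b j} = n := by
    have := Fintype.card_subtype_compl (fun j => b j ≤ 0)
    have h2 := Fintype.card_subtype_le (fun j => b j ≤ 0)
    simp only [not_le, Fintype.card_fin] at this h2
    omega
  rw [← Fintype.card_subtype]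
  by_cases hr : r < Fintype.card {j // 0 < b j}
  · exact Or.inl hr
  have hP : Fintype.card {j // 0 < b j} = r := by omega
  have hJ : Fintype.card {j // b j ≤ 0} = n - r := by omega
  refine Or.inr ⟨hP, ?_⟩
  have hnonneg : ∀ j, 0 ≤ b j := by
    intro j
    by_contra! hj
    have : A.vecMulLinear (Pi.single ⟨j, hj.le⟩ 1) = 0 := by
      funext i
      simp [A, (hF j i).2 hj]
    have := congrFun (hAinj (this.trans (map_zero _).symm)) ⟨j, hj.le⟩
    simp at this
  have hAsurj : Function.Surjective A.vecMulLinear :=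
    (LinearMap.injective_iff_surjective_of_finrank_eq_finrank (by simp [hJ])).1 hAinj
  have hAker : ∀ y, Matrix.mulVec A y = 0 → y = 0 := by
    intro y hy
    rw [← dotProduct_eq_zero_iff]
    intro d
    obtain ⟨c, rfl⟩ := hAsurj d
    rw [Matrix.vecMulLinear_apply, dotProduct_comm, ← Matrix.dotProduct_mulVec, hy, dotProduct_zero]
  let e : Fin r ≃ {j // 0 < b j} := (Fintype.equivFinOfCardEq hP).symm
  let B : Matrix (Fin r) (Fin r) (MvPolynomial (Fin 2) k) := Matrix.of fun i l => G i (e l)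
  have hBinj : ∀ v : Fin 2 → k, v ≠ 0 →
      Function.Injective ((Matrix.of fun i j => eval v (B i j)).mulVecLin) := by
    intro v hv
    obtain ⟨-, -, he⟩ := hexact v hv
    rw [injective_iff_map_eq_zero]
    intro x hx
    let x' : Fin n → k := fun j => if h : 0 < b j then x (e.symm ⟨j, h⟩) else 0
    have hx' : x' ∈ LinearMap.ker ((Matrix.of fun i j => eval v (G i j)).mulVecLin) := by
      rw [LinearMap.mem_ker, ← hx]
      funext i
      simp only [Matrix.mulVecLin_apply, Matrix.mulVec, dotProduct, Matrix.of_apply, B]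
      rw [← Fintype.sum_subtype_add_sum_subtype (fun j => 0 < b j)]
      rw [Finset.sum_eq_zero (s := (Finset.univ : Finset {j // ¬ 0 < b j}))
        (fun j _ => by simp [x', j.2]), add_zero, ← e.sum_comp]
      exact Finset.sum_congr rfl fun l _ => by simp [x', (e l).2]
    rw [← he] at hx'
    obtain ⟨y, hy⟩ := hx'
    have hy0 : y = 0 := by
      apply hAker
      funext ⟨j, hj⟩
      have := congrFun hy j
      simp only [x', not_lt.2 hj, dif_neg, not_false_eq_true] at this
      rw [Pi.zero_apply, ← this]
      simp only [Matrix.mulVecLin_apply, Matrix.mulVec, dotProduct, Matrix.of_apply, A]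
      exact Finset.sum_congr rfl fun i _ => by rw [(hF j i).eval_eq_eval_zero hj v]
    funext l
    have := congrFun hy (e l)
    simpa [x', hy0, (e l).2] using this.symm
  have hBbij : ∀ v : Fin 2 → k, v ≠ 0 →
      Function.Surjective ((Matrix.of fun i j => eval v (B i j)).mulVecLin) :=
    fun v hv => LinearMap.injective_iff_surjective.1 (hBinj v hv)
  have hrows : ∀ l, ∃ h, Matrix.vecMul h B = Pi.single l 1 := by
    intro l
    refine exists_vecMul_eq_of_forall_ne_zero B _ hBbij fun v hv => ?_
    obtain ⟨R, hR⟩ := exists_mul_eq_one_of_surjective _ (hBbij v hv)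
    exact ⟨Matrix.vecMul (fun j => eval v ((Pi.single l 1 : Fin r → MvPolynomial (Fin 2) k) j)) R, by
      rw [Matrix.vecMul_vecMul, mul_eq_one_comm.1 hR, Matrix.vecMul_one]⟩
  choose H hH using hrows
  have hHB : Matrix.of H * B = 1 := by
    ext1 l j
    have := congrFun (hH l) j
    rw [Matrix.one_eq_pi_single, ← this]
    rfl
  have hdet : ((eval 0).mapMatrix B).det ≠ 0 := by
    intro h0
    have := congrArg (fun M => ((eval (0 : Fin 2 → k)).mapMatrix M).det) hHB
    simp only [map_mul, map_one, Matrix.det_mul, h0, mul_zero, Matrix.det_one] at this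
    exact zero_ne_one this
  obtain ⟨σ, hσ⟩ : ∃ σ : Equiv.Perm (Fin r), ∀ l, eval 0 (B (σ l) l) ≠ 0 := by
    by_contra! hcon
    apply hdet
    rw [Matrix.det_apply]
    refine Finset.sum_eq_zero fun σ _ => ?_
    obtain ⟨l, hl⟩ := hcon σ
    rw [Finset.prod_eq_zero (Finset.mem_univ l) (by simpa using hl), smul_zero]
  have hab : ∀ l, b (e l) = a (σ l) := by
    intro l
    by_contra hne
    exact hσ l ((hG (σ l) (e l)).eval_zero_eq_zero (by omega))
  have hN : Fintype.card {j // ¬ 0 < b j} = n - r := by simpa only [not_lt] using hJ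
  let E : Fin r ⊕ Fin (n - r) ≃ Fin n :=
    (e.sumCongr (Fintype.equivFinOfCardEq hN).symm).trans (Equiv.sumCompl fun j => 0 < b j)
  have hl : ∀ l, b (E (Sum.inl l)) = a (σ l) := hab
  have hr0 : ∀ i, b (E (Sum.inr i)) = 0 := fun i =>
    le_antisymm (not_lt.1 ((Fintype.equivFinOfCardEq hN).symm i).2) (hnonneg _)
  rw [← Multiset.map_univ_val_equiv E, ← Multiset.map_univ_val_equiv σ, Multiset.map_map,
    Multiset.map_map, ← Finset.univ_disjSum_univ, Finset.val_disjSum, Multiset.disjSum,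
    Multiset.map_add, Multiset.map_map, Multiset.map_map, add_comm]
  congr 1
  · simp [Function.comp_def, hr0]
  · exact Multiset.map_congr rfl fun l _ => hl l
end
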